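/- arXiv:1610.08309 — 4 statements merged into one kernel-verified Lean document; each statement's English description precedes it below -/
import Mathlib

section
/- Let β ∈ ℝ with β > 1 and let m, M ∈ ℤ with m ≤ 0 ≤ M and M − m + 1 > β. Define ε = (M − m + 1 − β)/(2(β + 1)) > 0, ρ = (M − 2ε)/(β − 1), λ = (m + 2ε)/(β − 1), and I = [λ, ρ] ⊆ ℝ. Then for every real x with βλ − ε < x < βρ + ε, there exists an integer a with m ≤ a ≤ M such that the interval (x − ε, x + ε) is contained in [λ + a, ρ + a]. Consequently, the numeration system (β, {m, …, M}) has the OL Property. -/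
open Filter Pointwise

/-!
The choice of `ε` makes the length of `I = [λ, ρ]` exactly `1 + 2ε`, so the condition
`(x - ε, x + ε) ⊆ [λ + a, ρ + a]` amounts to `y - 1 ≤ a ≤ y` with `y = x - ε - λ`, and
`a = ⌊y⌋` always satisfies it. It remains to see that this digit lies in the alphabet: since
`(β - 1) λ = m + 2ε` and `(β - 1) ρ = M - 2ε`, the bounds `βλ - ε < x < βρ + ε` translate
exactly into `m < y < M + 1`.
-/

/-- For a real base `β > 1` and an alphabet of contiguous integers
`{m, …, M}` containing `0` with `M − m + 1 > β`, the interval `I = [λ, ρ]`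
with the given `ε > 0` witnesses the OL Property: every point of the
`ε`-fattening of `βI` has its `ε`-ball inside some translate `I + a`,
`m ≤ a ≤ M`; consequently `(β, {m, …, M})` has the OL Property. -/
theorem OL_property_real_positive_base (β : ℝ) (hβ : 1 < β)
    (m M : ℤ) (hm : m ≤ 0) (hM : 0 ≤ M)
    (hred : β < (M : ℝ) - (m : ℝ) + 1)
    (ε ρ lam : ℝ)
    (hε : ε = ((M : ℝ) - (m : ℝ) + 1 - β) / (2 * (β + 1)))
    (hρ : ρ = ((M : ℝ) - 2 * ε) / (β - 1))
    (hlam : lam = ((m : ℝ) + 2 * ε) / (β - 1)) :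
    0 < ε ∧
    (∀ x : ℝ, β * lam - ε < x → x < β * ρ + ε →
      ∃ a : ℤ, m ≤ a ∧ a ≤ M ∧
        Set.Ioo (x - ε) (x + ε) ⊆ Set.Icc (lam + (a : ℝ)) (ρ + (a : ℝ))) ∧
    (∃ ε' > (0 : ℝ), ∃ I : Set ℝ, Bornology.IsBounded I ∧
      ∀ x ∈ Metric.thickening ε' (β • I),
        ∃ a : ℤ, m ≤ a ∧ a ≤ M ∧ ∀ w ∈ Metric.ball x ε', w - (a : ℝ) ∈ I) := by
  have hb : 0 < β - 1 := by linarith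
  have hε0 : 0 < ε := by
    rw [hε]
    exact div_pos (by linarith) (by linarith)
  have hε' : ε * (2 * (β + 1)) = (M : ℝ) - m + 1 - β := by
    rw [hε]
    exact div_mul_cancel₀ _ (by linarith)
  have hρ' : ρ * (β - 1) = M - 2 * ε := by
    rw [hρ]
    exact div_mul_cancel₀ _ hb.ne'
  have hlam' : lam * (β - 1) = m + 2 * ε := by
    rw [hlam]
    exact div_mul_cancel₀ _ hb.ne'
  have hlen : ρ - lam = 1 + 2 * ε := by
    apply mul_right_cancel₀ hb.ne'
    linear_combination hρ' - hlam' - hε'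
  have key : ∀ x : ℝ, β * lam - ε < x → x < β * ρ + ε →
      ∃ a : ℤ, m ≤ a ∧ a ≤ M ∧
        Set.Ioo (x - ε) (x + ε) ⊆ Set.Icc (lam + (a : ℝ)) (ρ + (a : ℝ)) := by
    intro x h1 h2
    have hle := Int.floor_le (x - ε - lam)
    have hlt := Int.lt_floor_add_one (x - ε - lam)
    refine ⟨⌊x - ε - lam⌋, ?_, ?_, ?_⟩
    · exact Int.le_floor.2 (by linarith)
    · refine Int.lt_add_one_iff.1 (Int.floor_lt.2 ?_)
      push_cast
      linarith
    · rintro w ⟨hw1, hw2⟩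
      constructor <;> linarith
  refine ⟨hε0, key, ε, hε0, Set.Icc lam ρ, Metric.isBounded_Icc _ _, ?_⟩
  intro x hx
  obtain ⟨z, hz, hxz⟩ := Metric.mem_thickening_iff.1 hx
  obtain ⟨t, ⟨ht1, ht2⟩, rfl⟩ := Set.mem_smul_set.1 hz
  rw [Real.dist_eq, abs_lt, smul_eq_mul] at hxz
  have hl : β * lam ≤ β * t := by gcongr
  have hr : β * t ≤ β * ρ := by gcongr
  obtain ⟨a, ha1, ha2, ha⟩ := key x (by linarith) (by linarith)
  refine ⟨a, ha1, ha2, fun w hw => ?_⟩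
  rw [Real.ball_eq_Ioo] at hw
  obtain ⟨h1, h2⟩ := ha hw
  constructor <;> linarith
end

section
/- Let β ∈ ℝ with β < −1 and let m, M ∈ ℤ with m ≤ 0 ≤ M and M − m + 1 > |β|, i.e., M − m + 1 + β > 0. Define ε = (M − m + 1 + β)/(2(1 − β)) > 0, ρ = (1 − m)/(1 − β), λ = (−M − 1)/(1 − β), and I = [λ, ρ] ⊆ ℝ. Then for every real x with βρ − ε < x < βλ + ε, there exists an integer a with m ≤ a ≤ M such that the interval (x − ε, x + ε) is contained in [λ + a, ρ + a]. Consequently, the numeration system (β, {m, …, M}) has the OL Property, with 0 ∈ I. -/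
/-!
The choice of `ε` is exactly what makes `ρ - lam = 1 + 2 * ε`. Hence `(x - ε, x + ε)` lies in
`[lam + a, ρ + a]` as soon as `a` lies in the unit interval `[x + ε - ρ, x - ε - lam]`, and
`a = ⌊x - ε - lam⌋` does. The bounds on `x`, with `(1 - β) * ρ = 1 - m` and
`(1 - β) * lam = -M - 1`, place that unit interval strictly between `m - 1` and `M + 1`, so `a` is
a digit. Since `β < 0`, the `ε`-fattening of `β • [lam, ρ]` is contained in
`(β * ρ - ε, β * lam + ε)`, which gives the OL Property.
-/


open Filter Pointwise

/-- For a real base `β < −1` and an alphabet of contiguous integers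
`{m, …, M}` containing `0` with `M − m + 1 > |β|`, the interval `I = [λ, ρ]`
with the given `ε > 0` witnesses the OL Property (note `βI = [βρ, βλ]`);
consequently `(β, {m, …, M})` has the OL Property with `0 ∈ I`. -/
theorem OL_property_real_negative_base (β : ℝ) (hβ : β < -1)
    (m M : ℤ) (hm : m ≤ 0) (hM : 0 ≤ M)
    (hred : 0 < (M : ℝ) - (m : ℝ) + 1 + β)
    (ε ρ lam : ℝ)
    (hε : ε = ((M : ℝ) - (m : ℝ) + 1 + β) / (2 * (1 - β)))
    (hρ : ρ = (1 - (m : ℝ)) / (1 - β))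
    (hlam : lam = (-(M : ℝ) - 1) / (1 - β)) :
    0 < ε ∧ lam ≤ 0 ∧ 0 ≤ ρ ∧
    (∀ x : ℝ, β * ρ - ε < x → x < β * lam + ε →
      ∃ a : ℤ, m ≤ a ∧ a ≤ M ∧
        Set.Ioo (x - ε) (x + ε) ⊆ Set.Icc (lam + (a : ℝ)) (ρ + (a : ℝ))) ∧
    (∃ ε' > (0 : ℝ), ∃ I : Set ℝ, Bornology.IsBounded I ∧ (0 : ℝ) ∈ I ∧
      ∀ x ∈ Metric.thickening ε' (β • I),
        ∃ a : ℤ, m ≤ a ∧ a ≤ M ∧ ∀ w ∈ Metric.ball x ε', w - (a : ℝ) ∈ I) := by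
  have hb : 0 < 1 - β := by linarith
  have hmR : (m : ℝ) ≤ 0 := by exact_mod_cast hm
  have hMR : (0 : ℝ) ≤ M := by exact_mod_cast hM
  have hε0 : 0 < ε := by rw [hε]; positivity
  have hlam0 : lam ≤ 0 := by
    rw [hlam]; exact div_nonpos_of_nonpos_of_nonneg (by linarith) hb.le
  have hρ0 : 0 ≤ ρ := by rw [hρ]; exact div_nonneg (by linarith) hb.le
  have h1 : (1 - β) * ρ = 1 - m := by rw [hρ]; field_simp
  have h2 : (1 - β) * lam = -M - 1 := by rw [hlam]; field_simp
  have hlen : ρ - lam = 1 + 2 * ε := by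
    rw [hρ, hlam, hε]; field_simp; ring
  have key : ∀ x : ℝ, β * ρ - ε < x → x < β * lam + ε →
      ∃ a : ℤ, m ≤ a ∧ a ≤ M ∧
        Set.Ioo (x - ε) (x + ε) ⊆ Set.Icc (lam + (a : ℝ)) (ρ + (a : ℝ)) := by
    intro x hx1 hx2
    have hf1 := Int.floor_le (x - ε - lam)
    have hf2 := Int.lt_floor_add_one (x - ε - lam)
    refine ⟨⌊x - ε - lam⌋, ?_, ?_, ?_⟩
    · have : (m : ℝ) < (⌊x - ε - lam⌋ : ℝ) + 1 := by linarith
      exact Int.lt_add_one_iff.mp (by exact_mod_cast this)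
    · have : (⌊x - ε - lam⌋ : ℝ) < M + 1 := by linarith
      exact Int.lt_add_one_iff.mp (by exact_mod_cast this)
    · rintro w ⟨hw1, hw2⟩
      constructor <;> linarith
  refine ⟨hε0, hlam0, hρ0, key, ε, hε0, Set.Icc lam ρ, Metric.isBounded_Icc lam ρ,
    ⟨hlam0, hρ0⟩, ?_⟩
  intro x hx
  obtain ⟨z, hz, hxz⟩ := Metric.mem_thickening_iff.mp hx
  obtain ⟨y, ⟨hy1, hy2⟩, rfl⟩ := Set.mem_smul_set.mp hz
  rw [smul_eq_mul, Real.dist_eq, abs_lt] at hxz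
  have hβ0 : β ≤ 0 := by linarith
  have hz1 : β * y ≤ β * lam := mul_le_mul_of_nonpos_left hy1 hβ0
  have hz2 : β * ρ ≤ β * y := mul_le_mul_of_nonpos_left hy2 hβ0
  obtain ⟨a, ha1, ha2, ha⟩ := key x (by linarith) (by linarith)
  refine ⟨a, ha1, ha2, fun w hw => ?_⟩
  rw [Real.ball_eq_Ioo] at hw
  obtain ⟨hw1, hw2⟩ := ha hw
  constructor <;> linarith
end

section
/- Let β ∈ ℝ with β > 1 and let 𝒜 = {m, m+1, …, M} ⊆ ℤ with m ≤ −1 and M ≥ 1 (so {−1, 0, 1} ⊆ 𝒜). Then 0 has a non-trivial (β, 𝒜)-representation — i.e., there exists a sequence (z_j)_{j≥1} with z_j ∈ 𝒜, not all zero, and ∑_{j=1}^∞ z_j β^{-j} = 0 — if and only if β ≤ max{M + 1, −m + 1}. -/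
open Filter

/-!
Write `q = β⁻¹` and `D = max M (-m)`, so that the condition reads `β ≤ D + 1`.

If `β > D + 1`, the first nonzero digit, at position `k + 1`, contributes at least `q ^ (k + 1)` in
absolute value, while
all later digits together contribute at most `D q ^ (k + 2) / (1 - q) = q ^ (k + 1) D / (β - 1)`,
which is strictly smaller; so the sum cannot vanish (`sum_ne_zero_of_lt`).

If `β ≤ D + 1`, the greedy algorithm expands `1` in base `β` with digits in `{0, …, D}`
(`exists_expansion_one`). Putting the digit `-1` (when `D = M`) in front of this expansion, or the
digit `1` in front of its negative (when `D = -m`), yields a representation of zero.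
-/

/-- Remainders of the greedy expansion of `1` in base `β` with digits `{0, …, D}`. The digit is
capped at `D` because `β * x` may equal `D + 1`, in which case the remainder is again `1`. -/
noncomputable def greedyRem (β : ℝ) (D : ℤ) : ℕ → ℝ
  | 0 => 1
  | n + 1 => β * greedyRem β D n - (min D ⌊β * greedyRem β D n⌋ : ℤ)

lemma greedyRem_mem (β : ℝ) (hβ : 1 < β) (D : ℤ) (hD : β ≤ D + 1) (n : ℕ) :
    0 ≤ greedyRem β D n ∧ greedyRem β D n ≤ 1 := by
  induction n with
  | zero => simp [greedyRem]
  | succ n ih =>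
    obtain ⟨h0, h1⟩ := ih
    simp only [greedyRem]
    set y := β * greedyRem β D n with hy
    have hyD : y ≤ D + 1 := by nlinarith
    rcases le_total D ⌊y⌋ with h | h
    · rw [min_eq_left h]
      have := Int.le_floor.1 h
      constructor <;> linarith
    · rw [min_eq_right h]
      have h1 := Int.floor_le y
      have h2 := Int.lt_floor_add_one y
      constructor <;> linarith

lemma exists_expansion_one (β : ℝ) (hβ : 1 < β) (D : ℤ) (hD : β ≤ D + 1) :
    ∃ d : ℕ → ℤ, (∀ j, 0 ≤ d j ∧ d j ≤ D) ∧
      HasSum (fun j => (d j : ℝ) * β⁻¹ ^ (j + 1)) 1 := by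
  have hβ0 : 0 < β := by linarith
  have hD0 : 0 ≤ D := by
    have : (0 : ℝ) < D := by linarith
    exact_mod_cast this.le
  have hd : ∀ j, 0 ≤ min D ⌊β * greedyRem β D j⌋ := fun j =>
    le_min hD0 (Int.floor_nonneg.2 (mul_nonneg hβ0.le (greedyRem_mem β hβ D hD j).1))
  refine ⟨fun j => min D ⌊β * greedyRem β D j⌋, fun j => ⟨hd j, min_le_left _ _⟩, ?_⟩
  rw [hasSum_iff_tendsto_nat_of_nonneg
    (fun j => mul_nonneg (Int.cast_nonneg (hd j)) (by positivity))]
  have hpart : ∀ n, ∑ j ∈ Finset.range n,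
      ((min D ⌊β * greedyRem β D j⌋ : ℤ) : ℝ) * β⁻¹ ^ (j + 1) =
        1 - greedyRem β D n * β⁻¹ ^ n := by
    intro n
    induction n with
    | zero => simp [greedyRem]
    | succ n ih =>
      rw [Finset.sum_range_succ, ih, greedyRem, pow_succ]
      linear_combination (greedyRem β D n * β⁻¹ ^ n) * mul_inv_cancel₀ hβ0.ne'
  simp only [hpart]
  have hq : Tendsto (fun n : ℕ => β⁻¹ ^ n) atTop (nhds 0) :=
    tendsto_pow_atTop_nhds_zero_of_lt_one (by positivity) (inv_lt_one_of_one_lt₀ hβ)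
  have hz : Tendsto (fun n : ℕ => greedyRem β D n * β⁻¹ ^ n) atTop (nhds 0) := by
    refine squeeze_zero (fun n => ?_) (fun n => ?_) hq
    · exact mul_nonneg (greedyRem_mem β hβ D hD n).1 (by positivity)
    · exact mul_le_of_le_one_left (by positivity) (greedyRem_mem β hβ D hD n).2
  simpa using tendsto_const_nhds.sub hz

lemma sum_ne_zero_of_lt (β : ℝ) (D : ℝ) (hD0 : 0 ≤ D) (hD : D + 1 < β) (a : ℕ → ℤ)
    (ha : ∀ j, |(a j : ℝ)| ≤ D) (hne : ∃ k, a k ≠ 0) :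
    ∑' j, (a j : ℝ) * β⁻¹ ^ (j + 1) ≠ 0 := by
  intro hsum
  have hβ0 : 0 < β := by linarith
  set q := β⁻¹ with hq
  have hq0 : 0 < q := by positivity
  have hq1 : q < 1 := inv_lt_one_of_one_lt₀ (by linarith)
  have hgeo : ∀ k : ℕ, HasSum (fun j => D * q ^ k * q ^ j) (D * q ^ k * (1 - q)⁻¹) := fun k =>
    (hasSum_geometric_of_lt_one hq0.le hq1).mul_left _
  have hle : ∀ k j : ℕ, ‖(a (j + k) : ℝ) * q ^ (j + k + 1)‖ ≤ D * q ^ (k + 1) * q ^ j := by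
    intro k j
    rw [norm_mul, Real.norm_eq_abs, Real.norm_eq_abs, abs_of_pos (pow_pos hq0 (j + k + 1))]
    calc _ ≤ D * q ^ (j + k + 1) := by gcongr; exact ha _
      _ = _ := by ring
  have hs : Summable fun j => (a j : ℝ) * q ^ (j + 1) :=
    Summable.of_norm_bounded (hgeo 1).summable (fun j => by simpa using hle 0 j)
  classical
  set k := Nat.find hne
  have hk : a k ≠ 0 := Nat.find_spec hne
  have hlt : ∀ j < k, a j = 0 := fun j hj => not_not.1 (Nat.find_min hne hj)
  have hsplit := hs.sum_add_tsum_nat_add (k + 1)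
  rw [hsum, Finset.sum_range_succ, Finset.sum_eq_zero (fun j hj => by
    simp [hlt j (Finset.mem_range.1 hj)]), zero_add] at hsplit
  have htail := tsum_of_norm_bounded (hgeo (k + 1 + 1)) (hle (k + 1))
  have hak : (1 : ℝ) ≤ |(a k : ℝ)| := by exact_mod_cast Int.one_le_abs hk
  rw [← neg_eq_of_add_eq_zero_right hsplit, norm_neg, norm_mul, Real.norm_eq_abs,
    Real.norm_eq_abs, abs_of_pos (pow_pos hq0 _)] at htail
  have h1 : q ^ (k + 1) ≤ |(a k : ℝ)| * q ^ (k + 1) :=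
    le_mul_of_one_le_left (by positivity) hak
  -- Multiplying `D + 1 < β` by `q` gives the strict contraction `D q < 1 - q`.
  have h2 : D * q < 1 - q := by
    have := mul_lt_mul_of_pos_right hD hq0
    rw [hq, mul_inv_cancel₀ hβ0.ne', ← hq] at this
    linarith
  have h3 : D * q * (1 - q)⁻¹ < 1 := by
    rw [← div_eq_mul_inv, div_lt_one (by linarith)]
    exact h2
  have h4 : D * q ^ (k + 1 + 1) * (1 - q)⁻¹ < q ^ (k + 1) := by
    calc D * q ^ (k + 1 + 1) * (1 - q)⁻¹ = (D * q * (1 - q)⁻¹) * q ^ (k + 1) := by ring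
      _ < 1 * q ^ (k + 1) := by gcongr
      _ = _ := one_mul _
  linarith

/-- If `d` expands `1`, then the digit `s` followed by the digits `-s * d j` represents zero. -/
lemma tsum_prepend_eq_zero (β : ℝ) (d : ℕ → ℤ) (s : ℤ)
    (hd : HasSum (fun j => (d j : ℝ) * β⁻¹ ^ (j + 1)) 1) (a : ℕ → ℤ)
    (ha0 : a 0 = s) (ha : ∀ j, a (j + 1) = -s * d j) :
    ∑' j, (a j : ℝ) * β⁻¹ ^ (j + 1) = 0 := by
  apply HasSum.tsum_eq
  rw [← hasSum_nat_add_iff' 1]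
  have h1 : (fun j => (a (j + 1) : ℝ) * β⁻¹ ^ (j + 1 + 1)) =
      fun j => -(s : ℝ) * β⁻¹ * ((d j : ℝ) * β⁻¹ ^ (j + 1)) := by
    funext j
    rw [ha]
    push_cast
    ring
  have h2 : 0 - ∑ i ∈ Finset.range 1, (a i : ℝ) * β⁻¹ ^ (i + 1) = -(s : ℝ) * β⁻¹ * 1 := by
    simp [ha0]
  rw [h1, h2]
  exact hd.mul_left _

/-- For a real base `β > 1` and an alphabet of contiguous integers
`{m, …, M}` with `m ≤ −1` and `M ≥ 1`, zero has a non-trivial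
`(β, 𝒜)`-representation if and only if `β ≤ max (M + 1) (−m + 1)`. -/
theorem zero_nontrivial_representation_iff (β : ℝ) (hβ : 1 < β)
    (m M : ℤ) (hm : m ≤ -1) (hM : 1 ≤ M) :
    (∃ z : ℕ → ℤ, (∀ j, m ≤ z j ∧ z j ≤ M) ∧ (∃ k, 1 ≤ k ∧ z k ≠ 0) ∧
        ∑' j : ℕ, (z (j + 1) : ℝ) * β ^ (-(j : ℤ) - 1) = 0) ↔
      β ≤ ((max (M + 1) (-m + 1) : ℤ) : ℝ) := by
  have hpow : ∀ j : ℕ, β ^ (-(j : ℤ) - 1) = β⁻¹ ^ (j + 1) := by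
    intro j
    rw [inv_pow, ← zpow_natCast, ← zpow_neg]
    congr 1
    push_cast
    ring
  simp only [hpow]
  constructor
  · rintro ⟨z, hz, ⟨k, hk1, hk⟩, hsum⟩
    by_contra! hlt
    refine sum_ne_zero_of_lt β ((max M (-m) : ℤ) : ℝ) ?_ ?_ (fun j => z (j + 1)) ?_ ?_ hsum
    · exact_mod_cast le_max_of_le_left (by omega)
    · rw [max_add_add_right] at hlt
      exact_mod_cast hlt
    · intro j
      have h : |z (j + 1)| ≤ max M (-m) :=
        abs_le.2 ⟨by have := hz (j + 1); omega, by have := hz (j + 1); omega⟩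
      exact_mod_cast h
    · exact ⟨k - 1, by simpa [Nat.sub_add_cancel hk1] using hk⟩
  · intro h
    rw [Int.cast_max, le_max_iff] at h
    rcases h with h | h
    · obtain ⟨d, hd, hs⟩ := exists_expansion_one β hβ M (by exact_mod_cast h)
      -- The digit at index `0` is not used by the sum, so any admissible value will do.
      refine ⟨fun n => match n with | 0 => 0 | 1 => -1 | j + 2 => d j, ?_, ⟨1, le_rfl, by simp⟩,
        tsum_prepend_eq_zero β d (-1) hs _ rfl (fun j => by simp)⟩
      rintro (_ | _ | j)
      · simp only; omega
      · simp only; omega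
      · have := hd j
        simp only; omega
    · obtain ⟨d, hd, hs⟩ := exists_expansion_one β hβ (-m) (by exact_mod_cast h)
      refine ⟨fun n => match n with | 0 => 0 | 1 => 1 | j + 2 => -d j, ?_, ⟨1, le_rfl, by simp⟩,
        tsum_prepend_eq_zero β d 1 hs _ rfl (fun j => by simp)⟩
      rintro (_ | _ | j)
      · simp only; omega
      · simp only; omega
      · have := hd j
        simp only; omega
end

section
/- Let β = (1 + √5)/2 and 𝒜 = {−1, 0, 1}. Let (d_j)_{j≥1} be a digit sequence with d_j ∈ 𝒜, d₁ = 1, and such that none of the following patterns occur as the prefix d₁d₂d₃: (1, 0, −1), (1, −1, 0), (1, −1, −1). Then D = ∑_{j=1}^∞ d_j β^{-j} ≥ β^{-5}. -/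
/-!
Write `r = β⁻¹`, so `r ^ 2 = 1 - r`. Since every digit is at least `-1`, the tail
`∑_{j ≥ 4} d_j r ^ j` is at least `-∑_{j ≥ 4} r ^ j = -r ^ 4 / (1 - r) = -r ^ 2`
(`golden_tail_lower_bound`). It remains to compare `d₁ r + d₂ r ^ 2 + d₃ r ^ 3 - r ^ 2`
with `r ^ 5` for the finitely many admissible prefixes. The smallest value comes from
`(1, -1, 1)`, where it is `r - r ^ 2 + r ^ 3 - r ^ 2 = r ^ 5` exactly, so the bound is sharp.
-/

open Filter

/-- If `r ^ 2 = 1 - r`, the digits from position four on contribute at least `-r ^ 2`, the value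
attained when all of them equal `-1`. -/
lemma golden_tail_lower_bound {r : ℝ} (hr0 : 0 < r) (hr1 : r < 1) (hr : r ^ 2 = 1 - r)
    {d : ℕ → ℝ} (hd : ∀ j, -1 ≤ d j)
    (hs : Summable fun j : ℕ => d (j + 1) * r ^ (j + 1)) :
    d 1 * r + d 2 * r ^ 2 + d 3 * r ^ 3 - r ^ 2 ≤ ∑' j : ℕ, d (j + 1) * r ^ (j + 1) := by
  rw [← hs.sum_add_tsum_nat_add 3]
  have hg : HasSum (fun j : ℕ => -r ^ 4 * r ^ j) (-r ^ 4 * (1 - r)⁻¹) :=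
    (hasSum_geometric_of_lt_one hr0.le hr1).mul_left _
  have hv : -r ^ 4 * (1 - r)⁻¹ = -r ^ 2 := by
    rw [← hr]
    field_simp
  rw [hv] at hg
  have ht : -r ^ 2 ≤ ∑' j : ℕ, d (j + 3 + 1) * r ^ (j + 3 + 1) := by
    refine hasSum_le (fun j => ?_) hg ((summable_nat_add_iff 3).2 hs).hasSum
    have := mul_le_mul_of_nonneg_right (hd (j + 3 + 1)) (pow_nonneg hr0.le (j + 3 + 1))
    calc -r ^ 4 * r ^ j = -1 * r ^ (j + 3 + 1) := by ring
      _ ≤ _ := this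
  simp only [Finset.sum_range_succ, Finset.sum_range_zero]
  norm_num at ht ⊢
  linarith

/-- In base `β = (1 + √5)/2` with alphabet `{−1, 0, 1}`: a divisor with
leading digit `1` whose prefix `d₁d₂d₃` matches none of the preprocessing
patterns `10(−1)`, `1(−1)0`, `1(−1)(−1)` has value at least `β^{-5}`. -/
theorem golden_mean_preprocessed_divisor_bound (β : ℝ)
    (hβ : β = (1 + Real.sqrt 5) / 2)
    (d : ℕ → ℝ) (hd : ∀ j, d j ∈ ({-1, 0, 1} : Set ℝ)) (hd1 : d 1 = 1)
    (h1 : ¬(d 1 = 1 ∧ d 2 = 0 ∧ d 3 = -1))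
    (h2 : ¬(d 1 = 1 ∧ d 2 = -1 ∧ d 3 = 0))
    (h3 : ¬(d 1 = 1 ∧ d 2 = -1 ∧ d 3 = -1)) :
    β ^ (-(5 : ℤ)) ≤ ∑' j : ℕ, d (j + 1) * β ^ (-(j : ℤ) - 1) := by
  have h5 : Real.sqrt 5 ^ 2 = 5 := Real.sq_sqrt (by norm_num)
  have h5l : 2 < Real.sqrt 5 := Real.lt_sqrt_of_sq_lt (by norm_num)
  have hβ2 : β ^ 2 = β + 1 := by rw [hβ]; linarith
  have hβ1 : 3 / 2 < β := by rw [hβ]; linarith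
  have hβ0 : β ≠ 0 := by linarith
  obtain ⟨r, hrdef⟩ : ∃ r, r = β⁻¹ := ⟨_, rfl⟩
  have hr0 : 0 < r := by rw [hrdef]; exact inv_pos.2 (by linarith)
  have hrβ : r = β - 1 := by
    rw [hrdef]
    field_simp
    linarith
  have hr : r ^ 2 = 1 - r := by rw [hrβ]; linarith
  have hr1 : r < 1 := by nlinarith
  have hr3 : r ^ 3 = 2 * r - 1 := by linear_combination (r - 1) * hr
  have hr5 : r ^ 5 = 5 * r - 3 := by linear_combination (r ^ 3 - r ^ 2 + 2 * r - 3) * hr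
  have hterm : ∀ j : ℕ, β ^ (-(j : ℤ) - 1) = r ^ (j + 1) := fun j => by
    rw [hrdef, inv_pow, ← zpow_natCast, ← zpow_neg]
    congr 1
    push_cast
    ring
  have hlhs : β ^ (-(5 : ℤ)) = r ^ 5 := by simpa using hterm 4
  have hdl : ∀ j, -1 ≤ d j := fun j => by
    rcases hd j with h | h | h <;> rw [h] <;> norm_num
  have hdn : ∀ j, ‖d j‖ ≤ 1 := fun j => by
    rcases hd j with h | h | h <;> rw [h] <;> norm_num
  have hs : Summable fun j : ℕ => d (j + 1) * r ^ (j + 1) := by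
    refine Summable.of_norm_bounded
      ((summable_nat_add_iff 1).2 (summable_geometric_of_lt_one hr0.le hr1)) fun j => ?_
    rw [norm_mul, Real.norm_of_nonneg (pow_nonneg hr0.le (j + 1))]
    exact mul_le_of_le_one_left (pow_nonneg hr0.le _) (hdn _)
  simp_rw [hterm]
  rw [hlhs]
  refine le_trans ?_ (golden_tail_lower_bound hr0 hr1 hr hdl hs)
  rw [hr5, hr3, hr, hd1]
  -- `r < 2 / 3` settles the prefixes other than `(1, -1, 1)`, which gives equality.
  have hr_up : r < 2 / 3 := by nlinarith
  rcases hd 2 with e2 | e2 | e2 <;> rcases hd 3 with e3 | e3 | e3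
  · exact absurd ⟨hd1, e2, e3⟩ h3
  · exact absurd ⟨hd1, e2, e3⟩ h2
  · rw [e2, e3]; linarith
  · exact absurd ⟨hd1, e2, e3⟩ h1
  all_goals rw [e2, e3]; linarith
end
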